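/- arXiv:0906.2378 — 2 statements merged into one kernel-verified Lean document; each statement's English description precedes it below -/
import Mathlib

section
/- Let * be the map on the graded affine Hecke algebra H(Ψ,c) defined on generators by w* = w⁻¹ for w ∈ W and f* = −f + Σ_{β∈R⁺} c(β) f(β) s_β for f ∈ V*. Then * extends to an involutive anti-automorphism of H, and in terms of the Drinfeld generators f̃ = f − (1/2)Σ_{β∈R⁺} c(β) f(β) s_β it satisfies (f̃)* = −f̃. -/
/-!
Write `N_f = Σ_{β ∈ R⁺} c(β) f(β) s_β`, so that `f* = -f + N_f` and `f̃ = f - N_f / 2`.  The only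
relation of `H(Ψ,c)` whose image under `*` is not a short computation is `fg = gf`: one needs
`f* g* = g* f*`.

The cross relations say exactly that `w f̃ w⁻¹ = (w f)~` for all `w ∈ W` (`tildef_conj`; it suffices
to check simple reflections, which permute `R⁺ \ {α}`).  If `w₀ ∈ W` exchanges positive and negative
roots, then `w₀ N_f w₀⁻¹ = -N_{w₀ f}`, because `β ↦ c(β) f(β) s_β` is odd (`reflSum_longest`).
Adding the two, `w₀ f w₀⁻¹ = w₀ f - N_{w₀ f} = -(w₀ f)*`, so the elements `f*` are, up to sign, the
conjugates by `w₀` of elements of `V*`, and they commute (`star_comm`).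

The existence of `w₀` has to be derived from the combinatorial hypotheses on `R⁺`, without linear
positivity and without assuming `W` finite (`exists_longest`).  The strong exchange condition
(`deletion`) says that if `w⁻¹` changes the sign of `β` then `s_β w` is shorter than `w`.  Take `w`
of maximal length, lengths being counted modulo the kernel of the action on the roots.  If `w⁻¹`
kept the sign of some `β`, then `(s_β w)⁻¹` would change it, so `w = s_β (s_β w)` would be shorter
than `s_β w`, against maximality.
-/

noncomputable section Stmt12

open FreeAlgebra

/-- Defining relations of the graded affine Hecke algebra `H(Ψ,c)` (Lusztig
presentation): `ℂ[W]` and `S(V*)` are subalgebras, and for each simple root `α` and each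
`f ∈ V*` one has `s_α f - (s_α · f) s_α = c(α) f(α)`.  Here `ρ` is the action of the Weyl
group `W` on `V`, `s β ∈ W` is the reflection in a root `β`, `c` is the parameter
function, and `SP` is the set of simple roots. -/
inductive GRel (Vc : Type) [AddCommGroup Vc] [Module ℂ Vc] (W : Type) [Group W]
    (ρ : Representation ℂ W Vc) (s : Vc → W) (c : Vc → ℂ) (SP : Finset Vc) :
    FreeAlgebra ℂ (W ⊕ Module.Dual ℂ Vc) → FreeAlgebra ℂ (W ⊕ Module.Dual ℂ Vc) → Prop
  | grp_mul (w w' : W) : GRel Vc W ρ s c SP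
      (ι ℂ (Sum.inl w) * ι ℂ (Sum.inl w')) (ι ℂ (Sum.inl (w * w')))
  | grp_one : GRel Vc W ρ s c SP (ι ℂ (Sum.inl (1 : W))) 1
  | lin_add (f g : Module.Dual ℂ Vc) : GRel Vc W ρ s c SP
      (ι ℂ (Sum.inr (f + g))) (ι ℂ (Sum.inr f) + ι ℂ (Sum.inr g))
  | lin_smul (a : ℂ) (f : Module.Dual ℂ Vc) : GRel Vc W ρ s c SP
      (ι ℂ (Sum.inr (a • f))) (a • ι ℂ (Sum.inr f))
  | lin_comm (f g : Module.Dual ℂ Vc) : GRel Vc W ρ s c SP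
      (ι ℂ (Sum.inr f) * ι ℂ (Sum.inr g)) (ι ℂ (Sum.inr g) * ι ℂ (Sum.inr f))
  | cross (α : Vc) (hα : α ∈ SP) (f : Module.Dual ℂ Vc) : GRel Vc W ρ s c SP
      (ι ℂ (Sum.inl (s α)) * ι ℂ (Sum.inr f))
      (ι ℂ (Sum.inr (f ∘ₗ (ρ (s α)⁻¹ : Vc →ₗ[ℂ] Vc))) * ι ℂ (Sum.inl (s α))
        + (c α * f α) • 1)

/-- The graded affine Hecke algebra `H(Ψ,c)`, presented by the relations `GRel`. -/
abbrev GAHA (Vc : Type) [AddCommGroup Vc] [Module ℂ Vc] (W : Type) [Group W]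
    (ρ : Representation ℂ W Vc) (s : Vc → W) (c : Vc → ℂ) (SP : Finset Vc) :=
  RingQuot (GRel Vc W ρ s c SP)

variable (Vc : Type) [AddCommGroup Vc] [Module ℂ Vc] (W : Type) [Group W]
  (ρ : Representation ℂ W Vc) (s : Vc → W) (c : Vc → ℂ) (SP : Finset Vc)

/-- The image of `w ∈ W` in `H(Ψ,c)`. -/
def gw (w : W) : GAHA Vc W ρ s c SP :=
  RingQuot.mkAlgHom ℂ (GRel Vc W ρ s c SP) (ι ℂ (Sum.inl w))

/-- The image of `f ∈ V*` in `H(Ψ,c)`. -/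
def gf (f : Module.Dual ℂ Vc) : GAHA Vc W ρ s c SP :=
  RingQuot.mkAlgHom ℂ (GRel Vc W ρ s c SP) (ι ℂ (Sum.inr f))

/-- The Drinfeld-type element `f̃ = f - (1/2) Σ_{β ∈ R⁺} c(β) f(β) s_β`. -/
def tildef (Rp : Finset Vc) (f : Module.Dual ℂ Vc) : GAHA Vc W ρ s c SP :=
  gf Vc W ρ s c SP f
    - (1/2 : ℂ) • ∑ β ∈ Rp, (c β * f β) • gw Vc W ρ s c SP (s β)

section Aux

set_option linter.unusedSectionVars false

variable {Vc W ρ s c SP}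

variable (ρ s c SP) in
/-- The combinatorial hypotheses on simple roots `SP`, positive roots `Rp`, reflections `s` and
parameter `c`, bundled.  Neither `Rp ∩ -Rp = ∅` nor `0 ∉ SP` is required. -/
structure RootHyp (Rp : Finset Vc) : Prop where
  hSP : SP ⊆ Rp
  hss : ∀ α ∈ SP, s α * s α = 1
  hinvroot : ∀ α ∈ SP, ρ (s α) α = -α
  hperm : ∀ α ∈ SP, ∀ β ∈ Rp, β ≠ α → ρ (s α) β ∈ Rp ∧ ρ (s α) β ≠ α
  hreflconj : ∀ α ∈ SP, ∀ β ∈ Rp, s (ρ (s α) β) = s α * s β * (s α)⁻¹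
  hnegroot : ∀ β ∈ Rp, s (-β) = s β
  hcW : ∀ (w : W) (β : Vc), c (ρ w β) = c β
  hcneg : ∀ β : Vc, c (-β) = c β
  hgen : Subgroup.closure (s '' (SP : Set Vc)) = ⊤
  hconj : ∀ β ∈ Rp, ∃ (w : W) (α : Vc), α ∈ SP ∧ s β = w * s α * w⁻¹ ∧ ρ w α = β

open Classical in
/-- The set `Φ = R⁺ ∪ -R⁺` of all roots. -/
def allRoots (Rp : Finset Vc) : Finset Vc := Rp ∪ Rp.image (fun v => -v)

open Classical in
/-- The sign of a root: `1` on `R⁺`, `-1` on `-R⁺`, and `0` on `R⁺ ∩ -R⁺`; with this choice it is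
an odd function on all of `V`. -/
def sgn (Rp : Finset Vc) (v : Vc) : ℂ := (if v ∈ Rp then 1 else 0) - (if -v ∈ Rp then 1 else 0)

lemma mem_allRoots {Rp : Finset Vc} {v : Vc} : v ∈ allRoots Rp ↔ v ∈ Rp ∨ -v ∈ Rp := by
  simp [allRoots, neg_eq_iff_eq_neg]

lemma neg_mem_allRoots {Rp : Finset Vc} {v : Vc} (h : v ∈ allRoots Rp) : -v ∈ allRoots Rp := by
  rw [mem_allRoots] at *
  simpa [or_comm] using h

lemma sgn_neg (Rp : Finset Vc) (v : Vc) : sgn Rp (-v) = -sgn Rp v := by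
  unfold sgn
  rw [neg_neg]
  ring

lemma rho_mul (w u : W) (v : Vc) : ρ (w * u) v = ρ w (ρ u v) := by
  simp [map_mul]

lemma rho_inv_self (w : W) (v : Vc) : ρ w⁻¹ (ρ w v) = v := by
  rw [← rho_mul]; simp

lemma rho_self_inv (w : W) (v : Vc) : ρ w (ρ w⁻¹ v) = v := by
  rw [← rho_mul]; simp

namespace RootHyp

variable {Rp : Finset Vc}

/-! ### Roots, signs and reflections -/

lemma inv_simple (H : RootHyp ρ s c SP Rp) {α : Vc} (hα : α ∈ SP) : (s α)⁻¹ = s α :=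
  inv_eq_of_mul_eq_one_left (H.hss α hα)

lemma rho_simple_simple (H : RootHyp ρ s c SP Rp)
    {α : Vc} (hα : α ∈ SP) (v : Vc) : ρ (s α) (ρ (s α) v) = v := by
  rw [← rho_mul, H.hss α hα]; simp

lemma exists_word (H : RootHyp ρ s c SP Rp)
    (w : W) : ∃ l : List Vc, (∀ a ∈ l, a ∈ SP) ∧ (l.map s).prod = w := by
  have hw : w ∈ Subgroup.closure (s '' (SP : Set Vc)) := by rw [H.hgen]; trivial
  induction hw using Subgroup.closure_induction with
  | mem x hx =>
    obtain ⟨α, hα, rfl⟩ := hx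
    exact ⟨[α], by simpa using hα, by simp⟩
  | one => exact ⟨[], by simp, by simp⟩
  | mul x y _ _ hx hy =>
    obtain ⟨l, hl, rfl⟩ := hx
    obtain ⟨l', hl', rfl⟩ := hy
    refine ⟨l ++ l', ?_, by simp⟩
    intro a ha
    rcases List.mem_append.1 ha with h | h
    exacts [hl a h, hl' a h]
  | inv x _ hx =>
    obtain ⟨l, hl, rfl⟩ := hx
    refine ⟨l.reverse, by simpa using hl, ?_⟩
    rw [List.prod_inv_reverse, List.map_reverse, List.map_map]
    congr 2
    exact List.map_congr_left fun a ha => (H.inv_simple (hl a ha)).symm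

lemma word_induction (H : RootHyp ρ s c SP Rp)
    {P : W → Prop} (h1 : P 1) (hs : ∀ α ∈ SP, ∀ w, P w → P (s α * w)) (w : W) :
    P w := by
  obtain ⟨l, hl, rfl⟩ := H.exists_word w
  induction l with
  | nil => simpa using h1
  | cons a l ih =>
    rw [List.map_cons, List.prod_cons]
    exact hs a (hl a (by simp)) _ (ih fun b hb => hl b (by simp [hb]))

lemma simple_mem_iff (H : RootHyp ρ s c SP Rp)
    {α : Vc} (hα : α ∈ SP) {v : Vc} (h1 : v ≠ α) (h2 : v ≠ -α) :
    ρ (s α) v ∈ Rp ↔ v ∈ Rp := by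
  refine ⟨fun h => ?_, fun h => (H.hperm α hα v h h1).1⟩
  have h3 : ρ (s α) v ≠ α := by
    intro h3
    apply h2
    rw [← H.rho_simple_simple hα v, h3, H.hinvroot α hα]
  have := (H.hperm α hα _ h h3).1
  rwa [H.rho_simple_simple hα] at this

/-- A simple reflection preserves the sign of every vector other than `±α`. -/
lemma sgn_simple (H : RootHyp ρ s c SP Rp)
    {α : Vc} (hα : α ∈ SP) {v : Vc} (h1 : v ≠ α) (h2 : v ≠ -α) :
    sgn Rp (ρ (s α) v) = sgn Rp v := by
  have h3 : -v ≠ α := fun h => h2 (by rw [← h, neg_neg])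
  have h4 : -v ≠ -α := fun h => h1 (neg_injective h)
  have e1 := H.simple_mem_iff hα h1 h2
  have e2 := H.simple_mem_iff hα h3 h4
  rw [map_neg] at e2
  unfold sgn
  split_ifs <;> simp_all

lemma sgn_rho (H : RootHyp ρ s c SP Rp)
    (w : W) : ∀ v : Vc, sgn Rp (ρ w v) = sgn Rp v ∨ sgn Rp (ρ w v) = -sgn Rp v := by
  refine H.word_induction (P := fun w => ∀ v : Vc, sgn Rp (ρ w v) = sgn Rp v ∨
    sgn Rp (ρ w v) = -sgn Rp v) (by simp) ?_ w
  intro α hα w ih v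
  have key : ∀ x : Vc, sgn Rp (ρ (s α) x) = sgn Rp x ∨ sgn Rp (ρ (s α) x) = -sgn Rp x := by
    intro x
    by_cases h1 : x = α
    · right; rw [h1, H.hinvroot α hα, sgn_neg]
    by_cases h2 : x = -α
    · right; rw [h2, map_neg, H.hinvroot α hα, sgn_neg]
    exact Or.inl (H.sgn_simple hα h1 h2)
  rw [rho_mul]
  rcases key (ρ w v) with h | h <;> rcases ih v with h' | h' <;> rw [h, h'] <;> simp

lemma rho_mem (H : RootHyp ρ s c SP Rp) (w : W) : ∀ v ∈ allRoots Rp, ρ w v ∈ allRoots Rp := by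
  refine H.word_induction (P := fun w => ∀ v ∈ allRoots Rp, ρ w v ∈ allRoots Rp) (by simp) ?_ w
  intro α hα w ih v hv
  rw [rho_mul]
  have key : ∀ x ∈ Rp, ρ (s α) x ∈ allRoots Rp := by
    intro x hx
    by_cases h : x = α
    · rw [h, H.hinvroot α hα]
      exact neg_mem_allRoots (mem_allRoots.2 (Or.inl (H.hSP hα)))
    · exact mem_allRoots.2 (Or.inl (H.hperm α hα x hx h).1)
  rcases mem_allRoots.1 (ih v hv) with h | h
  · exact key _ h
  · have := neg_mem_allRoots (key _ h)
    rwa [map_neg, neg_neg] at this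

lemma s_neg (H : RootHyp ρ s c SP Rp) {v : Vc} (hv : v ∈ allRoots Rp) : s (-v) = s v := by
  rcases mem_allRoots.1 hv with h | h
  · exact H.hnegroot v h
  · have := H.hnegroot _ h
    rw [neg_neg] at this
    exact this.symm

lemma s_conj (H : RootHyp ρ s c SP Rp) (w : W) : ∀ v ∈ allRoots Rp, s (ρ w v) = w * s v * w⁻¹ := by
  refine H.word_induction (P := fun w => ∀ v ∈ allRoots Rp, s (ρ w v) = w * s v * w⁻¹)
    (by simp) ?_ w
  intro α hα w ih v hv
  have key : ∀ x ∈ allRoots Rp, s (ρ (s α) x) = s α * s x * (s α)⁻¹ := by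
    intro x hx
    rcases mem_allRoots.1 hx with h | h
    · exact H.hreflconj α hα x h
    · rw [← H.s_neg hx, ← H.hreflconj α hα _ h, map_neg, H.s_neg (H.rho_mem _ _ hx)]
  rw [rho_mul, key _ (H.rho_mem w v hv), ih v hv]
  group

lemma refl_facts (H : RootHyp ρ s c SP Rp)
    {v : Vc} (hv : v ∈ allRoots Rp) : s v * s v = 1 ∧ ρ (s v) v = -v := by
  have key : ∀ x ∈ Rp, s x * s x = 1 ∧ ρ (s x) x = -x := by
    intro x hx
    obtain ⟨w, α, hα, h, rfl⟩ := H.hconj x hx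
    constructor
    · rw [h]
      calc w * s α * w⁻¹ * (w * s α * w⁻¹) = w * (s α * s α) * w⁻¹ := by group
        _ = 1 := by rw [H.hss α hα]; group
    · rw [h, rho_mul, rho_mul, rho_inv_self, H.hinvroot α hα, map_neg]
  rcases mem_allRoots.1 hv with h | h
  · exact key v h
  · have := key _ h
    rw [H.s_neg hv] at this
    refine ⟨this.1, ?_⟩
    have h2 := this.2
    rw [map_neg, neg_inj] at h2
    rw [h2]

/-! ### The longest element -/

/-- Strong exchange condition: if `w = s_{α₁} ⋯ s_{αₖ}` changes the sign of the root `β` in the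
sense that `sgn (w⁻¹ β) ≠ sgn β`, then `s_β w` is obtained by deleting one letter. -/
lemma deletion (H : RootHyp ρ s c SP Rp) (l : List Vc) (hl : ∀ a ∈ l, a ∈ SP) :
    ∀ β ∈ allRoots Rp, sgn Rp (ρ (l.map s).prod⁻¹ β) ≠ sgn Rp β →
    ∃ l' : List Vc, (∀ a ∈ l', a ∈ SP) ∧ l'.length < l.length ∧
      (l'.map s).prod = s β * (l.map s).prod := by
  induction l with
  | nil => intro β _ h; simp at h
  | cons a l ih =>
    intro β hβ h
    have ha : a ∈ SP := hl a (by simp)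
    have haR : a ∈ allRoots Rp := mem_allRoots.2 (Or.inl (H.hSP ha))
    have hl' : ∀ b ∈ l, b ∈ SP := fun b hb => hl b (by simp [hb])
    by_cases h1 : s β = s a
    · refine ⟨l, hl', by simp, ?_⟩
      rw [List.map_cons, List.prod_cons, h1, ← mul_assoc, H.hss a ha, one_mul]
    have hs : sgn Rp (ρ (s a) β) = sgn Rp β := by
      apply H.sgn_simple ha
      · rintro rfl; exact h1 rfl
      · rintro rfl; exact h1 (H.s_neg haR)
    rw [List.map_cons, List.prod_cons, mul_inv_rev, rho_mul, H.inv_simple ha, ← hs] at h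
    obtain ⟨l', h2, h3, h4⟩ := ih hl' _ (H.rho_mem _ _ hβ) h
    refine ⟨a :: l', ?_, by simpa using h3, ?_⟩
    · intro b hb
      rcases List.mem_cons.1 hb with rfl | hb
      exacts [ha, h2 b hb]
    · rw [List.map_cons, List.prod_cons, h4, H.s_conj _ _ hβ, List.map_cons, List.prod_cons]
      have := H.hss a ha
      rw [H.inv_simple ha]
      calc s a * (s a * s β * s a * (l.map s).prod)
          = (s a * s a) * s β * (s a * (l.map s).prod) := by group
        _ = _ := by rw [this, one_mul]

/-- There is an element of `W` exchanging positive and negative roots. -/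
lemma exists_longest (H : RootHyp ρ s c SP Rp) :
    ∃ w : W, ∀ β ∈ allRoots Rp, sgn Rp (ρ w⁻¹ β) = -sgn Rp β := by
  classical
  let S : W → Set ℕ := fun w => {n | ∃ l : List Vc, (∀ a ∈ l, a ∈ SP) ∧ l.length = n ∧
    ∀ β ∈ allRoots Rp, ρ (l.map s).prod⁻¹ β = ρ w⁻¹ β}
  -- `D w` is the least length of a word acting on the roots as `w` does; as `W` need not be
  -- finite, only the action on the finite set of roots makes `D` bounded.
  let D : W → ℕ := fun w => sInf (S w)
  have hne : ∀ w, (S w).Nonempty := by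
    intro w
    obtain ⟨l, hl, rfl⟩ := H.exists_word w
    exact ⟨l.length, l, hl, rfl, fun _ _ => rfl⟩
  let K : W → (allRoots Rp → allRoots Rp) := fun w β => ⟨ρ w⁻¹ β, H.rho_mem _ _ β.2⟩
  have hK : ∀ w w', K w = K w' → D w = D w' := by
    intro w w' h
    have h2 : ∀ β ∈ allRoots Rp, ρ w⁻¹ β = ρ w'⁻¹ β := by
      intro β hβ
      exact congrArg Subtype.val (congrFun h ⟨β, hβ⟩)
    have : S w = S w' := by
      ext n
      constructor
      · rintro ⟨l, a, b, d⟩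
        exact ⟨l, a, b, fun β hβ => (d β hβ).trans (h2 β hβ)⟩
      · rintro ⟨l, a, b, d⟩
        exact ⟨l, a, b, fun β hβ => (d β hβ).trans (h2 β hβ).symm⟩
    simp only [D, this]
  have hfin : (Set.range D).Finite := by
    have hsub : Set.range D ⊆ (fun k => D (Function.invFun K k)) '' Set.univ := by
      rintro _ ⟨w, rfl⟩
      exact ⟨K w, trivial, hK _ _ (Function.invFun_eq ⟨w, rfl⟩)⟩
    exact (Set.finite_univ.image _).subset hsub
  obtain ⟨w, hw⟩ : ∃ w, ∀ w', D w' ≤ D w := by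
    obtain ⟨_, ⟨w, rfl⟩, h⟩ := Set.exists_max_image _ id hfin ⟨D 1, 1, rfl⟩
    exact ⟨w, fun w' => h _ ⟨w', rfl⟩⟩
  refine ⟨w, fun β hβ => ?_⟩
  by_contra hcon
  have h1 : sgn Rp (ρ w⁻¹ β) = sgn Rp β := (H.sgn_rho w⁻¹ β).resolve_right hcon
  obtain ⟨hsq, hneg⟩ := H.refl_facts hβ
  have hinv : (s β)⁻¹ = s β := inv_eq_of_mul_eq_one_left hsq
  obtain ⟨l, hl, hlen, hact⟩ := Nat.sInf_mem (hne (s β * w))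
  have h2 : sgn Rp (ρ (l.map s).prod⁻¹ β) ≠ sgn Rp β := by
    rw [hact β hβ, mul_inv_rev, rho_mul, hinv, hneg, map_neg, sgn_neg]
    intro h
    rw [h1] at h
    exact hcon (h1.trans h.symm)
  obtain ⟨l', hl', hlt, hprod⟩ := H.deletion l hl β hβ h2
  have h3 : D w ≤ l'.length := by
    refine Nat.sInf_le ⟨l', hl', rfl, fun γ hγ => ?_⟩
    rw [hprod, mul_inv_rev, rho_mul, hact _ (H.rho_mem _ _ hγ), mul_inv_rev, rho_mul,
      ← rho_mul (s β)⁻¹ (s β)⁻¹ γ, hinv, hsq, map_one, Module.End.one_apply]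
  have h4 : D (s β * w) = l.length := hlen.symm
  have := hw (s β * w)
  omega

end RootHyp

/-! ### The relations of the graded Hecke algebra -/

local notation "gW" => gw Vc W ρ s c SP
local notation "gF" => gf Vc W ρ s c SP

variable (ρ) in
/-- The contragredient action of `w ∈ W` on `V*`. -/
def dualAct (w : W) (f : Module.Dual ℂ Vc) : Module.Dual ℂ Vc :=
  f ∘ₗ (ρ w⁻¹ : Vc →ₗ[ℂ] Vc)

lemma dualAct_apply (w : W) (f : Module.Dual ℂ Vc) (v : Vc) : dualAct ρ w f v = f (ρ w⁻¹ v) := rfl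

lemma dualAct_one (f : Module.Dual ℂ Vc) : dualAct ρ 1 f = f := by
  ext v; simp [dualAct_apply]

lemma dualAct_mul (w u : W) (f : Module.Dual ℂ Vc) :
    dualAct ρ (w * u) f = dualAct ρ w (dualAct ρ u f) := by
  ext v; simp [dualAct_apply, map_mul]

lemma gw_mul (w u : W) : gW w * gW u = gW (w * u) := by
  unfold gw
  rw [← map_mul]
  exact RingQuot.mkAlgHom_rel ℂ (GRel.grp_mul w u)

lemma gw_one : gW (1 : W) = 1 := by
  unfold gw
  rw [RingQuot.mkAlgHom_rel ℂ GRel.grp_one, map_one]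

lemma gw_mul_inv (w : W) : gW w * gW w⁻¹ = 1 := by
  rw [gw_mul, mul_inv_cancel, gw_one]

lemma gw_inv_mul (w : W) : gW w⁻¹ * gW w = 1 := by
  rw [gw_mul, inv_mul_cancel, gw_one]

lemma gf_add (f g : Module.Dual ℂ Vc) : gF (f + g) = gF f + gF g := by
  unfold gf
  rw [← map_add]
  exact RingQuot.mkAlgHom_rel ℂ (GRel.lin_add f g)

lemma gf_smul (a : ℂ) (f : Module.Dual ℂ Vc) : gF (a • f) = a • gF f := by
  unfold gf
  rw [← map_smul]
  exact RingQuot.mkAlgHom_rel ℂ (GRel.lin_smul a f)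

lemma gf_comm (f g : Module.Dual ℂ Vc) : gF f * gF g = gF g * gF f := by
  unfold gf
  rw [← map_mul, ← map_mul]
  exact RingQuot.mkAlgHom_rel ℂ (GRel.lin_comm f g)

lemma gf_cross {α : Vc} (hα : α ∈ SP) (f : Module.Dual ℂ Vc) :
    gW (s α) * gF f = gF (dualAct ρ (s α) f) * gW (s α) + (c α * f α) • 1 := by
  have := RingQuot.mkAlgHom_rel ℂ (GRel.cross (ρ := ρ) (s := s) (c := c) α hα f)
  rw [map_mul, map_add, map_mul, map_smul, map_one] at this
  exact this

variable (ρ s c SP) in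
/-- The element `N_f = Σ_{β ∈ R⁺} c(β) f(β) s_β`. -/
def reflSum (Rp : Finset Vc) (f : Module.Dual ℂ Vc) : GAHA Vc W ρ s c SP :=
  ∑ β ∈ Rp, (c β * f β) • gW (s β)

lemma tildef_eq (Rp : Finset Vc) (f : Module.Dual ℂ Vc) :
    tildef Vc W ρ s c SP Rp f = gF f - (1 / 2 : ℂ) • reflSum ρ s c SP Rp f := rfl

/-- The negation of `RingQuot` agrees with that of its ring structure only after unfolding beyond
reducible transparency, so `rw [neg_mul]` can fail; this lemma and the next three restate the
identities with the former instance. -/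
lemma gaha_neg_mul (a b : GAHA Vc W ρ s c SP) : -a * b = -(a * b) := neg_mul a b

lemma gaha_mul_neg (a b : GAHA Vc W ρ s c SP) : a * -b = -(a * b) := mul_neg a b

lemma gaha_neg_smul (r : ℂ) (a : GAHA Vc W ρ s c SP) : -r • a = -(r • a) := neg_smul r a

lemma gaha_smul_neg (r : ℂ) (a : GAHA Vc W ρ s c SP) : r • -a = -(r • a) := smul_neg r a

namespace RootHyp

variable {Rp : Finset Vc}

/-- Conjugation by `s_α` permutes `R⁺ \ {α}`, so only the term of `α` is corrected. -/
lemma reflSum_simple (H : RootHyp ρ s c SP Rp) {α : Vc} (hα : α ∈ SP) (f : Module.Dual ℂ Vc) :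
    gW (s α) * reflSum ρ s c SP Rp f =
      reflSum ρ s c SP Rp (dualAct ρ (s α) f) * gW (s α) + (2 * (c α * f α)) • 1 := by
  classical
  unfold reflSum
  rw [← Finset.add_sum_erase _ _ (H.hSP hα), ← Finset.add_sum_erase Rp _ (H.hSP hα), mul_add,
    add_mul, Finset.mul_sum, Finset.sum_mul]
  have h1 : ∑ β ∈ Rp.erase α, gW (s α) * (c β * f β) • gW (s β) =
      ∑ β ∈ Rp.erase α, (c β * dualAct ρ (s α) f β) • gW (s β) * gW (s α) := by
    refine Finset.sum_nbij' (ρ (s α)) (ρ (s α)) ?_ ?_ ?_ ?_ ?_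
    · intro β hβ
      obtain ⟨h, h'⟩ := Finset.mem_erase.1 hβ
      have := H.hperm α hα β h' h
      exact Finset.mem_erase.2 ⟨this.2, this.1⟩
    · intro β hβ
      obtain ⟨h, h'⟩ := Finset.mem_erase.1 hβ
      have := H.hperm α hα β h' h
      exact Finset.mem_erase.2 ⟨this.2, this.1⟩
    · intro β _; exact H.rho_simple_simple hα β
    · intro β _; exact H.rho_simple_simple hα β
    · intro β hβ
      rw [dualAct_apply, rho_inv_self, H.hcW, H.hreflconj α hα β (Finset.mem_of_mem_erase hβ),
        mul_smul_comm, smul_mul_assoc, gw_mul, gw_mul]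
      congr 2
      group
  rw [h1, dualAct_apply, H.inv_simple hα, H.hinvroot α hα, mul_smul_comm, smul_mul_assoc, gw_mul,
    H.hss α hα, gw_one, map_neg]
  module

/-- The elements `f̃` transform under `W` as the elements of `V*` do. -/
lemma tildef_conj (H : RootHyp ρ s c SP Rp) (w : W) : ∀ f : Module.Dual ℂ Vc,
    gW w * tildef Vc W ρ s c SP Rp f = tildef Vc W ρ s c SP Rp (dualAct ρ w f) * gW w := by
  refine H.word_induction (P := fun w => ∀ f : Module.Dual ℂ Vc,
    gW w * tildef Vc W ρ s c SP Rp f = tildef Vc W ρ s c SP Rp (dualAct ρ w f) * gW w) ?_ ?_ w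
  · intro f
    rw [gw_one, dualAct_one, one_mul, mul_one]
  · intro α hα w ih f
    have key : ∀ g : Module.Dual ℂ Vc, gW (s α) * tildef Vc W ρ s c SP Rp g =
        tildef Vc W ρ s c SP Rp (dualAct ρ (s α) g) * gW (s α) := by
      intro g
      rw [tildef_eq, tildef_eq, mul_sub, sub_mul, mul_smul_comm, smul_mul_assoc, gf_cross hα,
        H.reflSum_simple hα]
      module
    rw [← gw_mul, mul_assoc, ih, ← mul_assoc, key, mul_assoc, dualAct_mul]

lemma reflSum_eq_sum_allRoots (H : RootHyp ρ s c SP Rp)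
    (f : Module.Dual ℂ Vc) : reflSum ρ s c SP Rp f =
    (1 / 2 : ℂ) • ∑ β ∈ allRoots Rp, (sgn Rp β * (c β * f β)) • gW (s β) := by
  classical
  have hsub : Rp ⊆ allRoots Rp := fun β hβ => mem_allRoots.2 (Or.inl hβ)
  have h1 : ∑ β ∈ allRoots Rp, (if β ∈ Rp then (c β * f β) • gW (s β) else 0) =
      reflSum ρ s c SP Rp f := by
    rw [← Finset.sum_filter, Finset.filter_mem_eq_inter, Finset.inter_eq_right.2 hsub]
    rfl
  have h2 : ∑ β ∈ allRoots Rp, (if -β ∈ Rp then (c β * f β) • gW (s β) else 0) =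
      -reflSum ρ s c SP Rp f := by
    rw [← h1, ← Finset.sum_neg_distrib]
    refine Finset.sum_nbij' (fun v => -v) (fun v => -v) (fun _ h => neg_mem_allRoots h)
      (fun _ h => neg_mem_allRoots h) (fun _ _ => neg_neg _) (fun _ _ => neg_neg _) ?_
    intro β hβ
    rw [H.s_neg hβ, H.hcneg, map_neg]
    split_ifs <;> simp [gaha_neg_smul]
  have h3 : ∑ β ∈ allRoots Rp, (sgn Rp β * (c β * f β)) • gW (s β) =
      ∑ β ∈ allRoots Rp, (if β ∈ Rp then (c β * f β) • gW (s β) else 0) -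
      ∑ β ∈ allRoots Rp, (if -β ∈ Rp then (c β * f β) • gW (s β) else 0) := by
    rw [← Finset.sum_sub_distrib]
    refine Finset.sum_congr rfl fun β _ => ?_
    unfold sgn
    split_ifs <;> simp [gaha_neg_smul]
  rw [h3, h1, h2]
  module

lemma reflSum_longest (H : RootHyp ρ s c SP Rp)
    {w : W} (hw : ∀ β ∈ allRoots Rp, sgn Rp (ρ w⁻¹ β) = -sgn Rp β)
    (f : Module.Dual ℂ Vc) :
    gW w * reflSum ρ s c SP Rp f = -reflSum ρ s c SP Rp (dualAct ρ w f) * gW w := by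
  rw [H.reflSum_eq_sum_allRoots, H.reflSum_eq_sum_allRoots, mul_smul_comm,
    gaha_neg_mul, smul_mul_assoc, ← gaha_smul_neg, Finset.mul_sum, Finset.sum_mul,
    ← Finset.sum_neg_distrib]
  congr 1
  refine Finset.sum_nbij' (ρ w) (ρ w⁻¹) (fun _ h => H.rho_mem _ _ h)
    (fun _ h => H.rho_mem _ _ h) (fun _ _ => rho_inv_self _ _) (fun _ _ => rho_self_inv _ _) ?_
  intro β hβ
  have h1 := hw _ (H.rho_mem w β hβ)
  rw [rho_inv_self] at h1
  rw [dualAct_apply, rho_inv_self, H.hcW, H.s_conj w β hβ, mul_smul_comm, smul_mul_assoc, gw_mul,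
    gw_mul, h1, inv_mul_cancel_right, neg_mul, gaha_neg_smul]

/-- The elements `f* = -f + N_f` commute: if `w₀` is the longest element, then
`f* = -w₀ (w₀⁻¹ f) w₀⁻¹`. -/
lemma star_comm (H : RootHyp ρ s c SP Rp) (f g : Module.Dual ℂ Vc) :
    (-gF f + reflSum ρ s c SP Rp f) * (-gF g + reflSum ρ s c SP Rp g) =
      (-gF g + reflSum ρ s c SP Rp g) * (-gF f + reflSum ρ s c SP Rp f) := by
  obtain ⟨w, hw⟩ := H.exists_longest
  have key : ∀ h : Module.Dual ℂ Vc, -gF h + reflSum ρ s c SP Rp h =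
      -(gW w * gF (dualAct ρ w⁻¹ h) * gW w⁻¹) := by
    intro h
    have e1 := H.tildef_conj w (dualAct ρ w⁻¹ h)
    have e2 := H.reflSum_longest hw (dualAct ρ w⁻¹ h)
    rw [← dualAct_mul, mul_inv_cancel, dualAct_one] at e1 e2
    rw [tildef_eq, tildef_eq, mul_sub, mul_smul_comm, e2] at e1
    have e3 : gW w * gF (dualAct ρ w⁻¹ h) = (gF h - reflSum ρ s c SP Rp h) * gW w := by
      rw [sub_eq_iff_eq_add] at e1
      rw [e1, sub_mul, sub_mul, gaha_neg_mul, smul_mul_assoc]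
      module
    rw [e3, mul_assoc, gw_mul_inv, mul_one]
    abel
  have key2 : ∀ a b : GAHA Vc W ρ s c SP,
      -(gW w * a * gW w⁻¹) * -(gW w * b * gW w⁻¹) = gW w * (a * b) * gW w⁻¹ := by
    intro a b
    calc -(gW w * a * gW w⁻¹) * -(gW w * b * gW w⁻¹)
        = gW w * a * (gW w⁻¹ * gW w) * b * gW w⁻¹ := by
          rw [gaha_neg_mul, gaha_mul_neg, neg_neg]
          simp only [mul_assoc]
      _ = gW w * (a * b) * gW w⁻¹ := by rw [gw_inv_mul, mul_one]; simp only [mul_assoc]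
  rw [key, key, key2, key2, gf_comm]

/-- The relation obtained by applying `*` to the cross relation. -/
lemma star_cross (H : RootHyp ρ s c SP Rp) {α : Vc} (hα : α ∈ SP) (f : Module.Dual ℂ Vc) :
    (-gF f + reflSum ρ s c SP Rp f) * gW (s α) =
      gW (s α) * (-gF (dualAct ρ (s α) f) + reflSum ρ s c SP Rp (dualAct ρ (s α) f)) +
        (c α * f α) • 1 := by
  have e : dualAct ρ (s α) (dualAct ρ (s α) f) = f := by
    rw [← dualAct_mul, H.hss α hα, dualAct_one]
  rw [mul_add, gaha_mul_neg, gf_cross hα, H.reflSum_simple hα, e, dualAct_apply, H.inv_simple hα,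
    H.hinvroot α hα, map_neg, add_mul, gaha_neg_mul]
  module

/-! ### The anti-automorphism -/

lemma exists_star (H : RootHyp ρ s c SP Rp) :
    ∃ T : GAHA Vc W ρ s c SP →ₐ[ℂ] (GAHA Vc W ρ s c SP)ᵐᵒᵖ,
    (∀ w, T (gW w) = MulOpposite.op (gW w⁻¹)) ∧
    ∀ f, T (gF f) = MulOpposite.op (-gF f + reflSum ρ s c SP Rp f) := by
  let t : W ⊕ Module.Dual ℂ Vc → (GAHA Vc W ρ s c SP)ᵐᵒᵖ :=
    Sum.elim (fun w => MulOpposite.op (gW w⁻¹))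
      (fun f => MulOpposite.op (-gF f + reflSum ρ s c SP Rp f))
  have ht : ∀ ⦃x y⦄, GRel Vc W ρ s c SP x y → FreeAlgebra.lift ℂ t x = FreeAlgebra.lift ℂ t y := by
    intro x y h
    induction h with
    | grp_mul w w' =>
      simp only [map_mul, FreeAlgebra.lift_ι_apply, t, Sum.elim_inl, ← MulOpposite.op_mul, gw_mul,
        mul_inv_rev]
    | grp_one =>
      simp only [map_one, FreeAlgebra.lift_ι_apply, t, Sum.elim_inl, inv_one, gw_one,
        MulOpposite.op_one]
    | lin_add f g =>
      simp only [map_add, FreeAlgebra.lift_ι_apply, t, Sum.elim_inr, ← MulOpposite.op_add]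
      congr 1
      rw [gf_add]
      simp only [reflSum, LinearMap.add_apply, mul_add, add_smul, Finset.sum_add_distrib]
      abel
    | lin_smul a f =>
      simp only [map_smul, FreeAlgebra.lift_ι_apply, t, Sum.elim_inr, ← MulOpposite.op_smul]
      congr 1
      rw [gf_smul, smul_add, smul_neg]
      simp only [reflSum, LinearMap.smul_apply, smul_eq_mul, Finset.smul_sum, smul_smul,
        mul_left_comm]
    | lin_comm f g =>
      simp only [map_mul, FreeAlgebra.lift_ι_apply, t, Sum.elim_inr, ← MulOpposite.op_mul]
      rw [H.star_comm]
    | cross α hα f =>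
      simp only [map_mul, map_add, map_smul, map_one, FreeAlgebra.lift_ι_apply, t, Sum.elim_inr,
        Sum.elim_inl, ← MulOpposite.op_mul, ← MulOpposite.op_one, ← MulOpposite.op_smul,
        ← MulOpposite.op_add]
      rw [H.inv_simple hα, H.star_cross hα f]
      simp only [dualAct, H.inv_simple hα]
  refine ⟨RingQuot.liftAlgHom ℂ ⟨FreeAlgebra.lift ℂ t, ht⟩, fun w => ?_, fun f => ?_⟩
  · rw [gw, RingQuot.liftAlgHom_mkAlgHom_apply, FreeAlgebra.lift_ι_apply]
    rfl
  · rw [gf, RingQuot.liftAlgHom_mkAlgHom_apply, FreeAlgebra.lift_ι_apply]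
    rfl

end RootHyp

end Aux

/-- The map defined on generators of the graded affine Hecke algebra
`H(Ψ,c)` by `w* = w⁻¹` (for `w ∈ W`) and `f* = -f + Σ_{β∈R⁺} c(β) f(β) s_β` (for
`f ∈ V*`) extends to an involutive anti-automorphism `*` of `H(Ψ,c)`, and in terms of the
Drinfeld generators `f̃ = f - (1/2) Σ_{β∈R⁺} c(β) f(β) s_β` it satisfies `(f̃)* = -f̃`.
(The hypotheses record standard facts about the root system and reflections.) -/
theorem stmt12
    (Rp : Finset Vc) (hSP : SP ⊆ Rp)
    (hss : ∀ α ∈ SP, s α * s α = 1)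
    (hinvroot : ∀ α ∈ SP, ρ (s α) α = -α)
    (hperm : ∀ α ∈ SP, ∀ β ∈ Rp, β ≠ α → ρ (s α) β ∈ Rp ∧ ρ (s α) β ≠ α)
    (hreflconj : ∀ α ∈ SP, ∀ β ∈ Rp, s (ρ (s α) β) = s α * s β * (s α)⁻¹)
    (hnegroot : ∀ β ∈ Rp, s (-β) = s β)
    (hcW : ∀ (w : W) (β : Vc), c (ρ w β) = c β)
    (hcneg : ∀ β : Vc, c (-β) = c β)
    (hgen : Subgroup.closure (s '' (SP : Set Vc)) = ⊤)
    (hconj : ∀ β ∈ Rp, ∃ (w : W) (α : Vc), α ∈ SP ∧ s β = w * s α * w⁻¹ ∧ ρ w α = β) :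
    ∃ τ : GAHA Vc W ρ s c SP →ₗ[ℂ] GAHA Vc W ρ s c SP,
      (∀ x y : GAHA Vc W ρ s c SP, τ (x * y) = τ y * τ x)
      ∧ τ 1 = 1
      ∧ (∀ x, τ (τ x) = x)
      ∧ (∀ w : W, τ (gw Vc W ρ s c SP w) = gw Vc W ρ s c SP w⁻¹)
      ∧ (∀ f : Module.Dual ℂ Vc,
          τ (gf Vc W ρ s c SP f)
            = - gf Vc W ρ s c SP f
              + ∑ β ∈ Rp, (c β * f β) • gw Vc W ρ s c SP (s β))
      ∧ (∀ f : Module.Dual ℂ Vc,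
          τ (tildef Vc W ρ s c SP Rp f) = - tildef Vc W ρ s c SP Rp f) := by
  have H : RootHyp ρ s c SP Rp :=
    ⟨hSP, hss, hinvroot, hperm, hreflconj, hnegroot, hcW, hcneg, hgen, hconj⟩
  obtain ⟨T, hTw, hTf⟩ := H.exists_star
  let τ : GAHA Vc W ρ s c SP →ₗ[ℂ] GAHA Vc W ρ s c SP :=
    (MulOpposite.opLinearEquiv ℂ).symm.toLinearMap ∘ₗ T.toLinearMap
  have hτ : ∀ x, τ x = (T x).unop := fun _ => rfl
  have hmul : ∀ x y, τ (x * y) = τ y * τ x := by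
    intro x y
    rw [hτ, hτ, hτ, map_mul, MulOpposite.unop_mul]
  have hone : τ 1 = 1 := by rw [hτ, map_one, MulOpposite.unop_one]
  have hw : ∀ w : W, τ (gw Vc W ρ s c SP w) = gw Vc W ρ s c SP w⁻¹ := by
    intro w
    rw [hτ, hTw, MulOpposite.unop_op]
  have hf : ∀ f : Module.Dual ℂ Vc, τ (gf Vc W ρ s c SP f) =
      -gf Vc W ρ s c SP f + reflSum ρ s c SP Rp f := by
    intro f
    rw [hτ, hTf, MulOpposite.unop_op]
  have hN : ∀ f : Module.Dual ℂ Vc, τ (reflSum ρ s c SP Rp f) = reflSum ρ s c SP Rp f := by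
    intro f
    unfold reflSum
    rw [map_sum]
    refine Finset.sum_congr rfl fun β hβ => ?_
    rw [map_smul, hw,
      inv_eq_of_mul_eq_one_left (H.refl_facts (mem_allRoots.2 (Or.inl hβ))).1]
  refine ⟨τ, hmul, hone, ?_, hw, hf, ?_⟩
  · intro x
    obtain ⟨a, rfl⟩ := RingQuot.mkAlgHom_surjective ℂ _ x
    induction a using FreeAlgebra.induction with
    | grade0 r => rw [AlgHom.commutes, Algebra.algebraMap_eq_smul_one, map_smul, map_smul, hone,
        hone]
    | grade1 x =>
      rcases x with w | f
      · change τ (τ (gw Vc W ρ s c SP w)) = gw Vc W ρ s c SP w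
        rw [hw, hw, inv_inv]
      · change τ (τ (gf Vc W ρ s c SP f)) = gf Vc W ρ s c SP f
        rw [hf, map_add, map_neg, hf, hN]
        abel
    | mul a b ha hb => rw [map_mul, hmul, hmul, ha, hb]
    | add a b ha hb => rw [map_add, map_add, map_add, ha, hb]
  · intro f
    rw [tildef_eq, map_sub, map_smul, hf, hN]
    module

end Stmt12
end

section
/- Let V = ℂ^{p+q} with the Hermitian form of signature (p,q) given by the diagonal matrix J = diag(1,...,1,−1,...,−1), G_R = U(p,q) with p ≥ q, M_R the block-diagonal subgroup of elements (x; x_1,...,x_q, x_q,...,x_1) with x ∈ U(p−q) and x_j ∈ U(1), and μ_0 = 1 ⊠ det the character of K_R = U(p)×U(q). Then (μ_0* ⊗ V^{⊗q})^{M_R} has dimension 2^q · q!, with basis {f_{σ(1)}^{η_1} ⊗ ... ⊗ f_{σ(q)}^{η_q} : η_j ∈ {±1}, σ ∈ S_q}, where f_j^η = e_{p−j+1} + η e_{p+j}. -/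
/-!
The vectors `e_i` (`i ≤ p - q`) and `f_j^η` form a basis of `V` (`adaptedBasis`) made of weight
vectors for the torus of elements `(1; z)` of `M_ℝ`: such an element fixes the `e_i` and multiplies
`f_j^η` by one coordinate of `z`, a different one for each `j`. Hence the pure tensors in this basis
form a basis of `V^{⊗q}` consisting of torus weight vectors, and an invariant is a combination of
those whose weight is `z ↦ ∏ z_j` (`weight_eq_of_repr_ne_zero`). Taking `z` to be `-1` in one
coordinate and `1` in the others, the product is `-1`, so each index `j` must occur among the `q`
tensor factors; as there are only `q` factors, the indices form a permutation
(`exists_perm_of_weight_eq`) and the tensor is on the given list. Conversely the listed tensors are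
invariant since every element of `M_ℝ`, whatever its `U(p-q)` part, scales `f_j^η` by that same
coordinate of `z`. Linear independence and the dimension count follow because the listed tensors are
distinct members of the tensor basis.
-/

open scoped TensorProduct

noncomputable section Stmt14

variable (p q : ℕ)

/-- The standard basis vector `e_a` of `V = ℂ^{p+q}` (0-indexed; zero if out of range). -/
def ebas (a : ℕ) : Fin (p+q) → ℂ :=
  if h : a < p + q then Pi.single (⟨a, h⟩ : Fin (p+q)) 1 else 0

/-- The matrix of the element `(x; x₁,…,x_q, x_q,…,x₁)` of `M_ℝ ⊂ U(p,q)`: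
block diagonal, with `u ∈ U(p-q)` in the upper-left block, `z_{i-(p-q)+1}` in diagonal
position `i` for `p-q ≤ i < p`, and `z_{q-(i-p)}` in diagonal position `i` for `p ≤ i`. -/
def mMatrix (u : Matrix (Fin (p-q)) (Fin (p-q)) ℂ) (z : Fin q → ℂ) :
    Matrix (Fin (p+q)) (Fin (p+q)) ℂ :=
  fun i i' =>
    if h : (i : ℕ) < p - q ∧ (i' : ℕ) < p - q then u ⟨i, h.1⟩ ⟨i', h.2⟩
    else if (i : ℕ) = (i' : ℕ) ∧ p - q ≤ (i : ℕ) then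
      (if (i : ℕ) < p then (if h2 : (i : ℕ) - (p - q) < q then z ⟨(i : ℕ) - (p - q), h2⟩ else 0)
       else (if h3 : q - 1 - ((i : ℕ) - p) < q then z ⟨q - 1 - ((i : ℕ) - p), h3⟩ else 0))
    else 0

/-- The action of such an element of `M_ℝ` on `V^{⊗q}`. -/
def mAct (u : Matrix (Fin (p-q)) (Fin (p-q)) ℂ) (z : Fin q → ℂ) :
    Module.End ℂ (⨂[ℂ] _ : Fin q, (Fin (p+q) → ℂ)) :=
  PiTensorProduct.map (fun _ => Matrix.toLin' (mMatrix p q u z))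

/-- The `M_ℝ`-invariants of `μ₀* ⊗ V^{⊗q}` for `μ₀ = 1 ⊠ det`: the vectors on which each
`m = (u, z) ∈ M_ℝ` acts by the scalar `μ₀(m) = ∏ⱼ zⱼ`. -/
def invSpace : Submodule ℂ (⨂[ℂ] _ : Fin q, (Fin (p+q) → ℂ)) :=
  ⨅ (u : Matrix.unitaryGroup (Fin (p-q)) ℂ) (z : Fin q → unitary ℂ),
    Module.End.eigenspace (mAct p q (u : Matrix (Fin (p-q)) (Fin (p-q)) ℂ)
      (fun j => (z j : ℂ))) (∏ j, (z j : ℂ))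

/-- The vectors `f_j^η = e_{p-j+1} + η e_{p+j}` (1-indexed), i.e. (0-indexed)
`f j η = e_{p-1-j} + η e_{p+j}`. -/
def fvec (j : Fin q) (η : ℤˣ) : Fin (p+q) → ℂ :=
  ebas p q (p - 1 - (j : ℕ)) + ((η : ℤ) : ℂ) • ebas p q (p + (j : ℕ))

section Helpers

/-- The family `e_1, …, e_{p-q}` together with all `f_j^η`. -/
def adapted : Fin (p-q) ⊕ (Fin q × ℤˣ) → (Fin (p+q) → ℂ) :=
  Sum.elim (fun i => ebas p q i) (fun x => fvec p q x.1 x.2)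

/-- The scalar by which the torus element `(1; z)` of `M_ℝ` acts on a member of `adapted`. The
indices of `z` and `f` run in opposite directions: `mMatrix` places `z` in increasing order before
position `p`, while `f_j` involves `e_{p-j+1}`. -/
def adaptedWeight (z : Fin q → ℂ) : Fin (p-q) ⊕ (Fin q × ℤˣ) → ℂ :=
  Sum.elim (fun _ => 1) (fun x => z x.1.rev)

variable {p q}

theorem top_le_span_adapted (hpq : q ≤ p) :
    ⊤ ≤ Submodule.span ℂ (Set.range (adapted p q)) := by
  have hplus (j : Fin q) : fvec p q j 1 ∈ Submodule.span ℂ (Set.range (adapted p q)) :=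
    Submodule.subset_span ⟨Sum.inr (j, 1), rfl⟩
  have hminus (j : Fin q) : fvec p q j (-1) ∈ Submodule.span ℂ (Set.range (adapted p q)) :=
    Submodule.subset_span ⟨Sum.inr (j, -1), rfl⟩
  have hlow (j : Fin q) : ebas p q (p - 1 - (j : ℕ)) =
      (1 / 2 : ℂ) • (fvec p q j 1 + fvec p q j (-1)) := by
    ext i
    simp [fvec]
    ring
  have hhigh (j : Fin q) : ebas p q (p + (j : ℕ)) =
      (1 / 2 : ℂ) • (fvec p q j 1 - fvec p q j (-1)) := by
    ext i
    simp [fvec]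
    ring
  have key (a : Fin (p+q)) : ebas p q a ∈ Submodule.span ℂ (Set.range (adapted p q)) := by
    by_cases h1 : (a : ℕ) < p - q
    · exact Submodule.subset_span ⟨Sum.inl ⟨a, h1⟩, rfl⟩
    · by_cases h2 : (a : ℕ) < p
      · have h3 : (a : ℕ) = p - 1 - ((⟨p - 1 - a, by omega⟩ : Fin q) : ℕ) := by
          simp only
          omega
        rw [h3, hlow]
        exact Submodule.smul_mem _ _ (Submodule.add_mem _ (hplus _) (hminus _))
      · have h3 : (a : ℕ) = p + ((⟨a - p, by omega⟩ : Fin q) : ℕ) := by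
          simp only
          omega
        rw [h3, hhigh]
        exact Submodule.smul_mem _ _ (Submodule.sub_mem _ (hplus _) (hminus _))
  rw [← (Pi.basisFun ℂ (Fin (p+q))).span_eq, Submodule.span_le]
  rintro _ ⟨a, rfl⟩
  have h := key a
  simpa [ebas] using h

/-- The family `adapted` as a basis of `V`: it spans and has `(p - q) + 2q = p + q` members. -/
def adaptedBasis (hpq : q ≤ p) :
    Module.Basis (Fin (p-q) ⊕ (Fin q × ℤˣ)) ℂ (Fin (p+q) → ℂ) :=
  basisOfTopLeSpanOfCardEqFinrank (adapted p q) (top_le_span_adapted hpq) (by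
    simp [Fintype.card_sum, Fintype.card_prod]
    omega)

theorem adaptedBasis_apply (hpq : q ≤ p) (k : Fin (p-q) ⊕ (Fin q × ℤˣ)) :
    adaptedBasis hpq k = adapted p q k := by
  simp [adaptedBasis]

theorem mMatrix_apply_ebas (u : Matrix (Fin (p-q)) (Fin (p-q)) ℂ) (z : Fin q → ℂ)
    {a : ℕ} (ha : a < p + q) :
    Matrix.toLin' (mMatrix p q u z) (ebas p q a) = fun i => mMatrix p q u z i ⟨a, ha⟩ := by
  ext i
  simp [ebas, ha, Matrix.toLin'_apply]

theorem mMatrix_apply_fvec (hpq : q ≤ p) (u : Matrix (Fin (p-q)) (Fin (p-q)) ℂ)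
    (z : Fin q → ℂ) (j : Fin q) (η : ℤˣ) :
    Matrix.toLin' (mMatrix p q u z) (fvec p q j η) = z j.rev • fvec p q j η := by
  have hj := j.isLt
  have hlow : Matrix.toLin' (mMatrix p q u z) (ebas p q (p - 1 - (j : ℕ))) =
      z j.rev • ebas p q (p - 1 - (j : ℕ)) := by
    have ha : p - 1 - (j : ℕ) < p + q := by omega
    rw [mMatrix_apply_ebas u z ha]
    ext i
    by_cases hi : (i : ℕ) = p - 1 - j
    · obtain rfl : i = ⟨p - 1 - j, ha⟩ := Fin.ext hi
      have h1 : ¬ (p - 1 - (j : ℕ) < p - q) := by omega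
      have h2 : p - 1 - (j : ℕ) < p := by omega
      have h3 : p - 1 - (j : ℕ) - (p - q) < q := by omega
      have h4 : (⟨p - 1 - (j : ℕ) - (p - q), h3⟩ : Fin q) = j.rev := by
        ext
        simp only [Fin.val_rev]
        omega
      have h5 : p - q ≤ p - 1 - (j : ℕ) := by omega
      simp [mMatrix, ebas, ha, h1, h2, h3, h4, h5]
    · have h1 : ¬ (p - 1 - (j : ℕ) < p - q) := by omega
      have h2 : i ≠ ⟨p - 1 - j, ha⟩ := fun h => hi (congrArg Fin.val h)
      simp [mMatrix, ebas, ha, h1, hi, h2]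
  have hhigh : Matrix.toLin' (mMatrix p q u z) (ebas p q (p + (j : ℕ))) =
      z j.rev • ebas p q (p + (j : ℕ)) := by
    have ha : p + (j : ℕ) < p + q := by omega
    rw [mMatrix_apply_ebas u z ha]
    ext i
    have h1 : ¬ (p + (j : ℕ) < p - q) := by omega
    by_cases hi : (i : ℕ) = p + j
    · obtain rfl : i = ⟨p + j, ha⟩ := Fin.ext hi
      have h3 : q - 1 - (j : ℕ) < q := by omega
      have h4 : (⟨q - 1 - (j : ℕ), h3⟩ : Fin q) = j.rev := by
        ext
        simp only [Fin.val_rev]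
        omega
      have h5 : p - q ≤ p + (j : ℕ) := by omega
      simp [mMatrix, ebas, h1, h3, h4, h5]
    · have h2 : i ≠ ⟨p + j, ha⟩ := fun h => hi (congrArg Fin.val h)
      simp [mMatrix, ebas, h1, hi, h2]
  rw [fvec, map_add, map_smul, hlow, hhigh, smul_add, smul_comm]

theorem mMatrix_one_apply_adapted (hpq : q ≤ p) (z : Fin q → ℂ)
    (k : Fin (p-q) ⊕ (Fin q × ℤˣ)) :
    Matrix.toLin' (mMatrix p q 1 z) (adapted p q k) = adaptedWeight p q z k • adapted p q k := by
  rcases k with a | x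
  · have hlt := a.isLt
    have ha : (a : ℕ) < p + q := by omega
    simp only [adapted, adaptedWeight, Sum.elim_inl, one_smul]
    rw [mMatrix_apply_ebas 1 z ha]
    ext i
    by_cases hi : (i : ℕ) = a
    · obtain rfl : i = ⟨a, ha⟩ := Fin.ext hi
      simp [mMatrix, ebas, ha]
    · have h2 : i ≠ ⟨a, ha⟩ := fun h => hi (congrArg Fin.val h)
      by_cases h3 : (i : ℕ) < p - q
      · have h4 : (⟨i, h3⟩ : Fin (p-q)) ≠ a := fun h => hi (congrArg Fin.val h)
        simp [mMatrix, ebas, ha, h2, h3, h4]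
      · simp [mMatrix, ebas, ha, hi, h2, h3]
  · exact mMatrix_apply_fvec hpq 1 z x.1 x.2

/-- An eigenvector of a diagonal operator only involves basis vectors of the same eigenvalue. -/
theorem weight_eq_of_repr_ne_zero {κ W : Type*} [AddCommGroup W] [Module ℂ W]
    (B : Module.Basis κ ℂ W) (T : Module.End ℂ W) (c : κ → ℂ) (hT : ∀ k, T (B k) = c k • B k)
    {x : W} {a : ℂ} (hx : T x = a • x) {k : κ} (hk : B.repr x k ≠ 0) : c k = a := by
  have h : B.coord k ∘ₗ T = c k • B.coord k := by
    refine B.ext fun l => ?_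
    by_cases hl : l = k
    · subst hl
      simp [hT]
    · simp [hT, hl]
  have h2 := LinearMap.congr_fun h x
  simp only [LinearMap.comp_apply, hx, map_smul, LinearMap.smul_apply, Module.Basis.coord_apply,
    smul_eq_mul] at h2
  exact (mul_right_cancel₀ hk h2).symm

/-- A pure tensor of the adapted basis whose torus weight is `z ↦ ∏ z_j` has every index `j`
exactly once among its factors. -/
theorem exists_perm_of_weight_eq (k : Fin q → Fin (p-q) ⊕ (Fin q × ℤˣ))
    (hk : ∀ z : Fin q → unitary ℂ,
      ∏ i, adaptedWeight p q (fun j => (z j : ℂ)) (k i) = ∏ j, (z j : ℂ)) :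
    ∃ (σ : Equiv.Perm (Fin q)) (ε : Fin q → ℤˣ), k = fun i => Sum.inr (σ i, ε i) := by
  have hocc (j : Fin q) : ∃ i η, k i = Sum.inr (j, η) := by
    by_contra! hcon
    -- If `j` does not occur, flipping the sign of its coordinate of `z` leaves the weight at `1`.
    have h := hk (Function.update 1 j.rev (-1))
    have hleft : ∏ i, adaptedWeight p q
        (fun l => ((Function.update (1 : Fin q → unitary ℂ) j.rev (-1) l : unitary ℂ) : ℂ)) (k i)
        = 1 := by
      refine Finset.prod_eq_one fun i _ => ?_
      rcases hki : k i with a | ⟨l, η⟩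
      · rfl
      · have hl : l ≠ j := fun h => hcon i η (h ▸ hki)
        simp [adaptedWeight, Function.update_of_ne (Fin.rev_injective.ne hl)]
    have hright : ∏ l, ((Function.update (1 : Fin q → unitary ℂ) j.rev (-1) l : unitary ℂ) : ℂ)
        = -1 := by
      rw [Finset.prod_eq_single j.rev]
      · simp [Unitary.coe_neg]
      · intro l _ hl
        simp [Function.update_of_ne hl]
      · simp
    rw [hleft, hright] at h
    norm_num at h
  choose τ η hτ using hocc
  have hinj : Function.Injective τ := by
    intro a b hab
    have h := (hτ a).symm.trans (hab ▸ hτ b)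
    simp only [Sum.inr.injEq, Prod.mk.injEq] at h
    exact h.1
  let e := Equiv.ofBijective τ (Finite.injective_iff_bijective.mp hinj)
  refine ⟨e.symm, fun i => η (e.symm i), funext fun i => ?_⟩
  rw [← hτ (e.symm i)]
  exact congrArg k (e.apply_symm_apply i).symm

theorem tprod_fvec_mem_invSpace (hpq : q ≤ p) (σ : Equiv.Perm (Fin q)) (ε : Fin q → ℤˣ) :
    PiTensorProduct.tprod ℂ (fun j : Fin q => fvec p q (σ j) (ε j)) ∈ invSpace p q := by
  simp only [invSpace, Submodule.mem_iInf, Module.End.mem_eigenspace_iff]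
  intro u z
  rw [mAct, PiTensorProduct.map_tprod]
  simp only [mMatrix_apply_fvec hpq]
  rw [MultilinearMap.map_smul_univ]
  congr 1
  exact Equiv.prod_comp (σ.trans Fin.revPerm) (fun j => (z j : ℂ))

end Helpers

/-- For `G_ℝ = U(p,q)`, `p ≥ q`, with `μ₀ = 1 ⊠ det`, the space
`(μ₀* ⊗ V^{⊗q})^{M_ℝ}` has dimension `2^q · q!`, with basis
`{f_{σ(1)}^{η₁} ⊗ ⋯ ⊗ f_{σ(q)}^{η_q} : ηⱼ ∈ {±1}, σ ∈ S_q}` where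
`f_j^η = e_{p-j+1} + η e_{p+j}`. -/
theorem stmt14 (hpq : q ≤ p) :
    LinearIndependent ℂ (fun se : Equiv.Perm (Fin q) × (Fin q → ℤˣ) =>
        PiTensorProduct.tprod ℂ (fun j : Fin q => fvec p q (se.1 j) (se.2 j)))
      ∧ Submodule.span ℂ (Set.range (fun se : Equiv.Perm (Fin q) × (Fin q → ℤˣ) =>
          PiTensorProduct.tprod ℂ (fun j : Fin q => fvec p q (se.1 j) (se.2 j))))
        = invSpace p q
      ∧ Module.finrank ℂ (invSpace p q) = 2 ^ q * Nat.factorial q := by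
  let B := Basis.piTensorProduct (fun _ : Fin q => adaptedBasis hpq)
  have hB (k) : B k = PiTensorProduct.tprod ℂ (fun i => adapted p q (k i)) := by
    simp [B, adaptedBasis_apply]
  let idx : Equiv.Perm (Fin q) × (Fin q → ℤˣ) → (Fin q → Fin (p-q) ⊕ (Fin q × ℤˣ)) :=
    fun se i => Sum.inr (se.1 i, se.2 i)
  have hidx : Function.Injective idx := by
    rintro ⟨σ, ε⟩ ⟨σ', ε'⟩ h
    have h' (i) : σ i = σ' i ∧ ε i = ε' i := by simpa [idx] using congrFun h i
    exact Prod.ext (Equiv.ext fun i => (h' i).1) (funext fun i => (h' i).2)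
  have hfam : (fun se : Equiv.Perm (Fin q) × (Fin q → ℤˣ) =>
      PiTensorProduct.tprod ℂ (fun j : Fin q => fvec p q (se.1 j) (se.2 j))) = B ∘ idx := by
    funext se
    exact (hB (idx se)).symm
  have hli : LinearIndependent ℂ (fun se : Equiv.Perm (Fin q) × (Fin q → ℤˣ) =>
      PiTensorProduct.tprod ℂ (fun j : Fin q => fvec p q (se.1 j) (se.2 j))) :=
    hfam ▸ B.linearIndependent.comp idx hidx
  have hspan : Submodule.span ℂ (Set.range (fun se : Equiv.Perm (Fin q) × (Fin q → ℤˣ) =>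
      PiTensorProduct.tprod ℂ (fun j : Fin q => fvec p q (se.1 j) (se.2 j))))
      = invSpace p q := by
    refine le_antisymm (Submodule.span_le.mpr ?_) fun x hx => ?_
    · rintro _ ⟨se, rfl⟩
      exact tprod_fvec_mem_invSpace hpq se.1 se.2
    · simp only [invSpace, Submodule.mem_iInf, Module.End.mem_eigenspace_iff] at hx
      rw [← B.linearCombination_repr x, Finsupp.linearCombination_apply]
      refine Submodule.sum_mem _ fun k hk => Submodule.smul_mem _ _ (Submodule.subset_span ?_)
      have hweight (z : Fin q → unitary ℂ) :
          ∏ i, adaptedWeight p q (fun j => (z j : ℂ)) (k i) = ∏ j, (z j : ℂ) := by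
        refine weight_eq_of_repr_ne_zero B (mAct p q 1 (fun j => (z j : ℂ)))
          (fun k => ∏ i, adaptedWeight p q (fun j => (z j : ℂ)) (k i)) (fun l => ?_)
          (hx 1 z) (Finsupp.mem_support_iff.mp hk)
        rw [hB, mAct, PiTensorProduct.map_tprod]
        simp only [mMatrix_one_apply_adapted hpq]
        rw [MultilinearMap.map_smul_univ]
      obtain ⟨σ, ε, rfl⟩ := exists_perm_of_weight_eq k hweight
      exact ⟨(σ, ε), congrFun hfam (σ, ε)⟩
  refine ⟨hli, hspan, ?_⟩
  rw [← hspan, finrank_span_eq_card hli]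
  simp [Fintype.card_prod, Fintype.card_perm, mul_comm]

end Stmt14
end
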